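/- arXiv:1105.2432 — 10 statements merged into one kernel-verified Lean document; each statement's English description precedes it below -/
import Mathlib

section
/- For every real number α > 0 and every real number β > 1 there exists a finite strategic game whose selfishness level equals α and whose price of stability equals β. -/
open Finset
open scoped ENNReal

/-- A strategic game with `n` players: each player `i` has a nonempty strategy
set `S i` and a real-valued payoff function `p i` on joint strategies. -/
structure Game (n : ℕ) where
  S : Fin n → Type
  ne : ∀ i, Nonempty (S i)
  p : Fin n → ((j : Fin n) → S j) → ℝ

namespace Game

variable {n : ℕ}

/-- The social welfare of a joint strategy. -/
def SW (G : Game n) (s : (j : Fin n) → G.S j) : ℝ := ∑ i, G.p i s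

/-- A joint strategy is a social optimum if it maximizes the social welfare. -/
def SocialOptimum (G : Game n) (s : (j : Fin n) → G.S j) : Prop :=
  ∀ t, G.SW t ≤ G.SW s

/-- A joint strategy is a (pure) Nash equilibrium if no unilateral deviation is profitable. -/
def NashEq (G : Game n) (s : (j : Fin n) → G.S j) : Prop :=
  ∀ (i : Fin n) (s' : G.S i), G.p i (Function.update s i s') ≤ G.p i s

/-- The altruistic version `G(α)` of a game `G`. -/
def alt (G : Game n) (α : ℝ) : Game n where
  S := G.S
  ne := G.ne
  p := fun i s => G.p i s + α * G.SW s

/-- `G` is `α`-selfish if some pure Nash equilibrium of `G(α)` is a social optimum of `G`. -/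
def Selfish (G : Game n) (α : ℝ) : Prop :=
  ∃ s, (G.alt α).NashEq s ∧ G.SocialOptimum s

/-- The selfishness level of `G`: the infimum of the nonnegative `α` for which `G`
is `α`-selfish (`⊤` if there is no such `α`). -/
noncomputable def selfishnessLevel (G : Game n) : ℝ≥0∞ :=
  sInf {x : ℝ≥0∞ | ∃ α : ℝ, 0 ≤ α ∧ G.Selfish α ∧ x = ENNReal.ofReal α}

/-- A social optimum is stable if no player profits from a unilateral deviation
to another social optimum. -/
def StableOptimum (G : Game n) (s : (j : Fin n) → G.S j) : Prop :=
  G.SocialOptimum s ∧ ∀ (i : Fin n) (s' : G.S i),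
    G.SocialOptimum (Function.update s i s') →
      G.p i (Function.update s i s') ≤ G.p i s

/-- The appeal factor of a unilateral deviation `s'` of player `i` from `s`. -/
noncomputable def AF (G : Game n) (s : (j : Fin n) → G.S j) (i : Fin n) (s' : G.S i) : ℝ :=
  (G.p i (Function.update s i s') - G.p i s) /
    (G.SW s - G.SW (Function.update s i s'))

end Game

/-!
In `G(γ)`, a social optimum resists a deviation that loses welfare exactly when the deviator's gain
is at most `γ` times that loss, that is, when the appeal factor is at most `γ`. In a prisoner's
dilemma with temptation `T`, reward `R`, punishment `P` and sucker's payoff `S`, mutual cooperation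
is the only optimum and its deviations all have appeal factor `(T - R) / (2 * R - (T + S))`, while
mutual defection is the only equilibrium. The punishment enters only the price of stability `R / P`,
so the two quantities can be prescribed independently.
-/

namespace Game

section General

variable {n : ℕ} {G : Game n} {s t : (j : Fin n) → G.S j} {γ : ℝ}

/-- A strategy `d` of player `i` is strictly dominant if switching to it is strictly profitable
from every joint strategy in which player `i` does not already play it. -/
def StrictlyDominant (G : Game n) (i : Fin n) (d : G.S i) : Prop :=
  ∀ s, s i ≠ d → G.p i s < G.p i (Function.update s i d)

theorem nashEq_iff_eq_of_strictlyDominant {d : (j : Fin n) → G.S j}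
    (hd : ∀ i, G.StrictlyDominant i (d i)) : G.NashEq s ↔ s = d := by
  constructor
  · intro hs
    funext i
    by_contra hne
    exact (hd i s hne).not_ge (hs i (d i))
  · rintro rfl i s'
    by_cases hs' : s' = s i
    · rw [hs', Function.update_eq_self]
    · simpa using (hd i (Function.update s i s') (by simpa using hs')).le

theorem SocialOptimum.socialOptimum_iff (hs : G.SocialOptimum s) :
    G.SocialOptimum t ↔ G.SW t = G.SW s :=
  ⟨fun ht => (hs t).antisymm (ht s), fun h r => h ▸ hs r⟩

theorem SocialOptimum.SW_lt_iff (hs : G.SocialOptimum s) :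
    G.SW t < G.SW s ↔ ¬G.SocialOptimum t := by
  rw [hs.socialOptimum_iff, (hs t).lt_iff_ne]

theorem nashEq_alt_iff : (G.alt γ).NashEq s ↔ ∀ (i : Fin n) (s' : G.S i),
    G.p i (Function.update s i s') - G.p i s ≤
      γ * (G.SW s - G.SW (Function.update s i s')) := by
  refine forall₂_congr fun i s' => ?_
  change G.p i (Function.update s i s') + γ * G.SW (Function.update s i s') ≤
    G.p i s + γ * G.SW s ↔ _
  rw [mul_sub, sub_le_sub_iff, add_comm (γ * G.SW s)]

theorem SocialOptimum.AF_le_iff (hs : G.SocialOptimum s) {i : Fin n} {s' : G.S i}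
    (hs' : ¬G.SocialOptimum (Function.update s i s')) :
    G.AF s i s' ≤ γ ↔ G.p i (Function.update s i s') - G.p i s ≤
      γ * (G.SW s - G.SW (Function.update s i s')) :=
  div_le_iff₀ (sub_pos.2 (hs.SW_lt_iff.2 hs'))

theorem SocialOptimum.nashEq_alt_iff (hs : G.SocialOptimum s) :
    (G.alt γ).NashEq s ↔ G.StableOptimum s ∧ ∀ (i : Fin n) (s' : G.S i),
      ¬G.SocialOptimum (Function.update s i s') → G.AF s i s' ≤ γ := by
  have gain_le_iff {i : Fin n} {s' : G.S i} (h : G.SocialOptimum (Function.update s i s')) :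
      G.p i (Function.update s i s') - G.p i s ≤
        γ * (G.SW s - G.SW (Function.update s i s')) ↔
      G.p i (Function.update s i s') ≤ G.p i s := by
    rw [hs.socialOptimum_iff.1 h, sub_self, mul_zero, sub_nonpos]
  rw [Game.nashEq_alt_iff]
  constructor
  · intro h
    exact ⟨⟨hs, fun i s' hs' => (gain_le_iff hs').1 (h i s')⟩,
      fun i s' hs' => (hs.AF_le_iff hs').2 (h i s')⟩
  · rintro ⟨⟨-, stable⟩, AF_le⟩ i s'
    by_cases hs' : G.SocialOptimum (Function.update s i s')
    · exact (gain_le_iff hs').2 (stable i s' hs')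
    · exact (hs.AF_le_iff hs').1 (AF_le i s' hs')

theorem selfish_iff_exists_stableOptimum : G.Selfish γ ↔
    ∃ s, G.StableOptimum s ∧ ∀ (i : Fin n) (s' : G.S i),
      ¬G.SocialOptimum (Function.update s i s') → G.AF s i s' ≤ γ :=
  exists_congr fun _ =>
    ⟨fun ⟨hnash, hs⟩ => hs.nashEq_alt_iff.1 hnash, fun h => ⟨h.1.1.nashEq_alt_iff.2 h, h.1.1⟩⟩

theorem selfish_iff_of_socialOptimum_iff_eq (hs : ∀ t, G.SocialOptimum t ↔ t = s) :
    G.Selfish γ ↔ ∀ (i : Fin n) (s' : G.S i), s' ≠ s i → G.AF s i s' ≤ γ := by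
  have stable : G.StableOptimum s :=
    ⟨(hs s).2 rfl, fun i s' h => (congrArg (G.p i) ((hs _).1 h)).le⟩
  have exists_iff {Q : ((j : Fin n) → G.S j) → Prop} :
      (∃ t, G.StableOptimum t ∧ Q t) ↔ Q s :=
    ⟨fun ⟨t, ht, hQ⟩ => (hs t).1 ht.1 ▸ hQ, fun hQ => ⟨s, stable, hQ⟩⟩
  simp only [selfish_iff_exists_stableOptimum, exists_iff, hs, Function.update_eq_self_iff, ne_eq]

theorem selfishnessLevel_eq_ofReal {a : ℝ} (h : ∀ γ, 0 ≤ γ → (G.Selfish γ ↔ a ≤ γ)) :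
    G.selfishnessLevel = ENNReal.ofReal a := by
  apply le_antisymm
  · refine sInf_le ⟨max a 0, le_max_right a 0, (h _ (le_max_right a 0)).2 (le_max_left a 0), ?_⟩
    simp
  · refine le_sInf ?_
    rintro _ ⟨γ, hγ, hself, rfl⟩
    exact ENNReal.ofReal_le_ofReal ((h γ hγ).1 hself)

end General

section PrisonersDilemma

/-- The two moves available to each player of a prisoner's dilemma. -/
inductive DilemmaMove
  | cooperate
  | defect

open DilemmaMove

instance : Finite DilemmaMove :=
  .of_surjective (fun b : Bool => if b then cooperate else defect) <| by
    rintro (_ | _)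
    exacts [⟨true, rfl⟩, ⟨false, rfl⟩]

/-- The payoff matrix of a prisoner's dilemma, for a player's own move followed by the opponent's:
temptation `T`, reward `R`, punishment `P` and sucker's payoff `S`. -/
def dilemmaPayoff (T R P S : ℝ) : DilemmaMove → DilemmaMove → ℝ
  | cooperate, cooperate => R
  | cooperate, defect => S
  | defect, cooperate => T
  | defect, defect => P

/-- The symmetric two-player game with the payoffs of a prisoner's dilemma. The opponent of player
`i` is `i.rev`, and no ordering of the four payoffs is imposed. -/
abbrev prisonersDilemma (T R P S : ℝ) : Game 2 where
  S _ := DilemmaMove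
  ne _ := ⟨cooperate⟩
  p i s := dilemmaPayoff T R P S (s i) (s i.rev)

variable {T R P S : ℝ}

theorem prisonersDilemma_SW (s : Fin 2 → DilemmaMove) (i : Fin 2) :
    (prisonersDilemma T R P S).SW s =
      dilemmaPayoff T R P S (s i) (s i.rev) + dilemmaPayoff T R P S (s i.rev) (s i) := by
  refine (Fin.sum_univ_two _).trans ?_
  fin_cases i
  · rfl
  · exact add_comm _ _

theorem prisonersDilemma_p_update (s : Fin 2 → DilemmaMove) (i : Fin 2) (m : DilemmaMove) :
    (prisonersDilemma T R P S).p i (Function.update s i m) =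
      dilemmaPayoff T R P S m (s i.rev) := by
  fin_cases i <;> rfl

theorem prisonersDilemma_SW_update (s : Fin 2 → DilemmaMove) (i : Fin 2) (m : DilemmaMove) :
    (prisonersDilemma T R P S).SW (Function.update s i m) =
      dilemmaPayoff T R P S m (s i.rev) + dilemmaPayoff T R P S (s i.rev) m := by
  rw [prisonersDilemma_SW _ i]
  fin_cases i <;> rfl

theorem prisonersDilemma_strictlyDominant_defect (hSP : S < P) (hRT : R < T) (i : Fin 2) :
    (prisonersDilemma T R P S).StrictlyDominant i defect := by
  intro (s : Fin 2 → DilemmaMove) hs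
  rw [prisonersDilemma_p_update]
  change dilemmaPayoff T R P S (s i) (s i.rev) < _
  cases hi : s i with
  | defect => exact absurd hi hs
  | cooperate =>
    cases s i.rev with
    | cooperate => exact hRT
    | defect => exact hSP

theorem prisonersDilemma_nashEq_iff (hSP : S < P) (hRT : R < T) (s : Fin 2 → DilemmaMove) :
    (prisonersDilemma T R P S).NashEq s ↔ s = fun _ => defect :=
  nashEq_iff_eq_of_strictlyDominant (prisonersDilemma_strictlyDominant_defect hSP hRT)

theorem prisonersDilemma_SW_const (m : DilemmaMove) :
    (prisonersDilemma T R P S).SW (fun _ => m) = 2 * dilemmaPayoff T R P S m m := by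
  rw [prisonersDilemma_SW _ 0, two_mul]

theorem prisonersDilemma_SW_lt (hPR : P < R) (hTS : T + S < 2 * R) {s : Fin 2 → DilemmaMove}
    (hs : s ≠ fun _ => cooperate) : (prisonersDilemma T R P S).SW s < 2 * R := by
  rw [prisonersDilemma_SW s 0]
  cases h₀ : s 0 <;> cases h₁ : s (Fin.rev 0)
  case cooperate.cooperate =>
    exact absurd (funext (Fin.forall_fin_two.2 ⟨h₀, h₁⟩)) hs
  all_goals
    simp only [dilemmaPayoff]
    linarith

theorem prisonersDilemma_socialOptimum_iff (hPR : P < R) (hTS : T + S < 2 * R)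
    (s : Fin 2 → DilemmaMove) :
    (prisonersDilemma T R P S).SocialOptimum s ↔ s = fun _ => cooperate := by
  have SW_cooperate : (prisonersDilemma T R P S).SW (fun _ => cooperate) = 2 * R :=
    prisonersDilemma_SW_const cooperate
  constructor
  · intro hs
    by_contra hne
    exact (prisonersDilemma_SW_lt hPR hTS hne).not_ge (SW_cooperate ▸ hs _)
  · rintro rfl t
    rw [SW_cooperate]
    by_cases ht : t = fun _ => cooperate
    · rw [ht, SW_cooperate]
    · exact (prisonersDilemma_SW_lt hPR hTS ht).le

theorem prisonersDilemma_AF_defect (i : Fin 2) :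
    (prisonersDilemma T R P S).AF (fun _ => cooperate) i defect =
      (T - R) / (2 * R - (T + S)) := by
  rw [AF, prisonersDilemma_p_update, prisonersDilemma_SW_update, prisonersDilemma_SW_const]
  rfl

theorem prisonersDilemma_selfish_iff (hPR : P < R) (hTS : T + S < 2 * R) (γ : ℝ) :
    (prisonersDilemma T R P S).Selfish γ ↔ (T - R) / (2 * R - (T + S)) ≤ γ := by
  rw [selfish_iff_of_socialOptimum_iff_eq (prisonersDilemma_socialOptimum_iff hPR hTS)]
  constructor
  · intro h
    exact prisonersDilemma_AF_defect (0 : Fin 2) ▸ h 0 defect nofun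
  · rintro h i (_ | _) hne
    · exact absurd rfl hne
    · exact (prisonersDilemma_AF_defect i).trans_le h

theorem prisonersDilemma_selfishnessLevel (hPR : P < R) (hTS : T + S < 2 * R) :
    (prisonersDilemma T R P S).selfishnessLevel =
      ENNReal.ofReal ((T - R) / (2 * R - (T + S))) :=
  selfishnessLevel_eq_ofReal fun γ _ => prisonersDilemma_selfish_iff hPR hTS γ

end PrisonersDilemma

end Game

/-- For every real `α > 0` and `β > 1` there is a finite strategic game whose
selfishness level equals `α` and whose price of stability equals `β`. -/
theorem selfishness_level_and_price_of_stability_arbitrary (α β : ℝ) (hα : 0 < α) (hβ : 1 < β) :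
    ∃ (n : ℕ), 1 < n ∧ ∃ G : Game n, (∀ i, Finite (G.S i)) ∧
      G.selfishnessLevel = ENNReal.ofReal α ∧
      ∃ s s', G.SocialOptimum s ∧ G.NashEq s' ∧
        (∀ t, G.NashEq t → G.SW t ≤ G.SW s') ∧
        G.SW s / G.SW s' = β := by
  -- Normalized so that defecting against a cooperator gains `α` and costs one unit of welfare.
  set G := Game.prisonersDilemma (2 * α + 1) (α + 1) ((α + 1) / β) 0
  have punishment_pos : 0 < (α + 1) / β := by positivity
  have punishment_lt_reward : (α + 1) / β < α + 1 := div_lt_self (by linarith) hβ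
  have opt_iff := Game.prisonersDilemma_socialOptimum_iff (T := 2 * α + 1) (S := 0)
    punishment_lt_reward (by linarith)
  have nash_iff := Game.prisonersDilemma_nashEq_iff (R := α + 1) (T := 2 * α + 1)
    punishment_pos (by linarith)
  refine ⟨2, one_lt_two, G, fun _ => inferInstanceAs (Finite Game.DilemmaMove), ?level,
    fun _ => .cooperate, fun _ => .defect, (opt_iff _).2 rfl, (nash_iff _).2 rfl,
    fun t ht => (congrArg G.SW ((nash_iff t).1 ht)).le, ?stability⟩
  case level =>
    rw [Game.prisonersDilemma_selfishnessLevel punishment_lt_reward (by linarith)]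
    congr 1
    ring
  case stability =>
    rw [Game.prisonersDilemma_SW_const, Game.prisonersDilemma_SW_const]
    simp only [Game.dilemmaPayoff]
    field_simp
end

section
/- For every α ≥ 0 there exists a strategic game G such that G is β-selfish for every β > α, but G is not α-selfish (hence the selfishness level of G equals α yet the infimum defining it is not attained). -/
open Finset
open scoped ENNReal

/-!
Player 0 decides whether to accept an offer that player 1 has chosen from a family `a`. Accepting
offer `k` gains player 0 the amount `a k` and costs society exactly `1`, so the social optima are
the rejections, and rejecting offer `k` is stable under altruism `β` precisely when `a k ≤ β`.
Hence the game is `β`-selfish iff `a k ≤ β` for some `k`, and the offers `α + 1 / (k + 1)`, whose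
infimum `α` is not attained, give the required game.
-/

namespace Game

theorem selfishnessLevel_eq_ofReal_of_isGLB {n : ℕ} {G : Game n} {α : ℝ}
    (h : IsGLB {β : ℝ | 0 ≤ β ∧ G.Selfish β} α) :
    G.selfishnessLevel = ENNReal.ofReal α := by
  have image_isGLB : IsGLB (ENNReal.ofReal '' {β : ℝ | 0 ≤ β ∧ G.Selfish β}) (ENNReal.ofReal α) :=
    h.isGLB_of_tendsto (ENNReal.ofReal_mono.monotoneOn _) h.nonempty
      ENNReal.continuous_ofReal.continuousWithinAt
  rw [← image_isGLB.sInf_eq, selfishnessLevel]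
  congr 1 with x
  simp only [Set.mem_ofPred_eq, Set.mem_image, and_assoc, eq_comm]

theorem alt_nashEq_iff {n : ℕ} {G : Game n} {β : ℝ} {s : (j : Fin n) → G.S j} :
    (G.alt β).NashEq s ↔ ∀ (i : Fin n) (s' : G.S i),
      G.p i (Function.update s i s') - G.p i s ≤
        β * (G.SW s - G.SW (Function.update s i s')) := by
  refine forall₂_congr fun i s' ↦ ?_
  change G.p i (Function.update s i s') + β * G.SW (Function.update s i s') ≤
    G.p i s + β * G.SW s ↔ _
  rw [mul_sub, sub_le_sub_iff, add_comm (β * G.SW s), add_comm (G.p i s)]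

end Game

/-- The temptation game with offers `a`: player 1 selects an offer `k` and player 0 accepts (`true`)
or rejects (`false`) it. Accepting pays `a k` to player 0 and `-1 - a k` to player 1, while
rejecting pays nothing, so that acceptance lowers the social welfare by `1`. -/
def temptationGame {ι : Type} [Nonempty ι] (a : ι → ℝ) : Game 2 where
  S := ![Bool, ι]
  ne := Fin.forall_fin_two.2 ⟨inferInstanceAs (Nonempty Bool), inferInstanceAs (Nonempty ι)⟩
  p i s := bif s 0 then ![a (s 1), -1 - a (s 1)] i else 0

namespace temptationGame

variable {ι : Type} [Nonempty ι] {a : ι → ℝ}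

/-- The joint strategy in which player 0 answers `b` to the offer `k` of player 1, named so that
`Bool` and `ι` appear in place of the dependent strategy types. -/
def profile (a : ι → ℝ) (b : Bool) (k : ι) : (i : Fin 2) → (temptationGame a).S i :=
  (piFinTwoEquiv (temptationGame a).S).symm (b, k)

theorem exists_profile_eq (s : (i : Fin 2) → (temptationGame a).S i) :
    ∃ b k, profile a b k = s :=
  ⟨s 0, s 1, (piFinTwoEquiv (temptationGame a).S).symm_apply_apply s⟩

theorem update_profile_zero (b b' : Bool) (k : ι) :
    Function.update (profile a b k) 0 b' = profile a b' k :=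
  funext <| Fin.forall_fin_two.2 ⟨rfl, rfl⟩

theorem update_profile_one (b : Bool) (k k' : ι) :
    Function.update (profile a b k) 1 k' = profile a b k' :=
  funext <| Fin.forall_fin_two.2 ⟨rfl, rfl⟩

theorem p_profile (i : Fin 2) (b : Bool) (k : ι) :
    (temptationGame a).p i (profile a b k) = bif b then ![a k, -1 - a k] i else 0 :=
  rfl

theorem sw_profile (b : Bool) (k : ι) :
    (temptationGame a).SW (profile a b k) = bif b then -1 else 0 := by
  rw [Game.SW, Fin.sum_univ_two, p_profile, p_profile]
  cases b <;> simp

theorem socialOptimum_profile_iff {b : Bool} {k : ι} :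
    (temptationGame a).SocialOptimum (profile a b k) ↔ b = false := by
  have optimal_iff : (temptationGame a).SocialOptimum (profile a b k) ↔
      ∀ b' k', (temptationGame a).SW (profile a b' k') ≤ (temptationGame a).SW (profile a b k) := by
    refine ⟨fun optimal b' k' ↦ optimal _, fun h s ↦ ?_⟩
    obtain ⟨b', k', rfl⟩ := exists_profile_eq s
    exact h b' k'
  rw [optimal_iff]
  cases b <;> simp [sw_profile]

theorem alt_nashEq_profile_iff {β : ℝ} {b : Bool} {k : ι} :
    ((temptationGame a).alt β).NashEq (profile a b k) ↔
      (∀ b', (temptationGame a).p 0 (profile a b' k) - (temptationGame a).p 0 (profile a b k) ≤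
        β * ((temptationGame a).SW (profile a b k) - (temptationGame a).SW (profile a b' k))) ∧
      ∀ k', (temptationGame a).p 1 (profile a b k') - (temptationGame a).p 1 (profile a b k) ≤
        β * ((temptationGame a).SW (profile a b k) - (temptationGame a).SW (profile a b k')) := by
  rw [Game.alt_nashEq_iff, Fin.forall_fin_two]
  refine and_congr (forall_congr' fun b' ↦ ?_) (forall_congr' fun k' ↦ ?_)
  · rw [update_profile_zero b b' k]
  · rw [update_profile_one b k k']

theorem alt_nashEq_profile_false_iff {β : ℝ} {k : ι} :
    ((temptationGame a).alt β).NashEq (profile a false k) ↔ a k ≤ β := by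
  simp [alt_nashEq_profile_iff, p_profile, sw_profile]

theorem selfish_iff {β : ℝ} : (temptationGame a).Selfish β ↔ ∃ k, a k ≤ β := by
  constructor
  · rintro ⟨s, nash, optimal⟩
    obtain ⟨b, k, rfl⟩ := exists_profile_eq (a := a) s
    obtain rfl := socialOptimum_profile_iff.1 optimal
    exact ⟨k, alt_nashEq_profile_false_iff.1 nash⟩
  · rintro ⟨k, hk⟩
    exact ⟨profile a false k, alt_nashEq_profile_false_iff.2 hk, socialOptimum_profile_iff.2 rfl⟩

end temptationGame

theorem exists_add_one_div_le_iff {K : Type*} [Field K] [LinearOrder K] [IsStrictOrderedRing K]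
    [Archimedean K] {x y : K} : (∃ k : ℕ, x + 1 / ((k : K) + 1) ≤ y) ↔ x < y := by
  constructor
  · rintro ⟨k, hk⟩
    exact (lt_add_of_pos_right x Nat.one_div_pos_of_nat).trans_le hk
  · intro hxy
    obtain ⟨k, hk⟩ := exists_nat_one_div_lt (sub_pos.2 hxy)
    exact ⟨k, (lt_sub_iff_add_lt'.1 hk).le⟩

/-- for every `α ≥ 0` there is a strategic game that is `β`-selfish for every
`β > α` but not `α`-selfish; hence its selfishness level equals `α` but the infimum is not
attained. -/
theorem exists_game_with_unattained_selfishness_level (α : ℝ) (hα : 0 ≤ α) :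
    ∃ (n : ℕ), 1 < n ∧ ∃ G : Game n,
      (∀ β : ℝ, α < β → G.Selfish β) ∧
      ¬ G.Selfish α ∧
      G.selfishnessLevel = ENNReal.ofReal α := by
  let G := temptationGame fun k : ℕ ↦ α + 1 / ((k : ℝ) + 1)
  have selfish_iff_lt (β : ℝ) : G.Selfish β ↔ α < β :=
    temptationGame.selfish_iff.trans exists_add_one_div_le_iff
  have selfish_eq_Ioi : {β : ℝ | 0 ≤ β ∧ G.Selfish β} = Set.Ioi α := by
    ext β
    simpa only [Set.mem_ofPred_eq, selfish_iff_lt, Set.mem_Ioi, and_iff_right_iff_imp]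
      using fun h : α < β ↦ hα.trans h.le
  refine ⟨2, one_lt_two, G, fun β ↦ (selfish_iff_lt β).2, ?_, ?_⟩
  · rw [selfish_iff_lt]
    exact lt_irrefl α
  · exact Game.selfishnessLevel_eq_ofReal_of_isGLB (selfish_eq_Ioi ▸ isGLB_Ioi)
end

section
/- For every strategic game G with n players and all α, β ≥ 0, the games G(α + β) and (G(α))(β/(1 + nα)) are identical, i.e., for every player i and every joint strategy s, the payoff of player i at s in G(α + β) equals the payoff of player i at s in the altruistic version of G(α) with parameter β/(1 + nα). -/
open Finset
open scoped ENNReal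

namespace Game

variable {n : ℕ}

theorem SW_alt (G : Game n) (α : ℝ) (s : (j : Fin n) → G.S j) :
    (G.alt α).SW s = (1 + n * α) * G.SW s :=
  calc
    (G.alt α).SW s = ∑ i, (G.p i s + α * G.SW s) := rfl
    _ = G.SW s + n * (α * G.SW s) := by
      simp only [sum_add_distrib, sum_const, card_univ, Fintype.card_fin, nsmul_eq_mul, SW]
    _ = (1 + n * α) * G.SW s := by ring

theorem p_alt_alt (G : Game n) (α γ : ℝ) (i : Fin n) (s : (j : Fin n) → G.S j) :
    ((G.alt α).alt γ).p i s = (G.alt (α + γ * (1 + n * α))).p i s :=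
  calc
    ((G.alt α).alt γ).p i s = G.p i s + α * G.SW s + γ * (G.alt α).SW s := rfl
    _ = G.p i s + (α + γ * (1 + n * α)) * G.SW s := by rw [SW_alt]; ring

end Game

theorem alt_alt_eq_alt_add_general {n : ℕ} (G : Game n) (α β : ℝ) (hα : 1 + n * α ≠ 0)
    (i : Fin n) (s : (j : Fin n) → G.S j) :
    (G.alt (α + β)).p i s = ((G.alt α).alt (β / (1 + n * α))).p i s := by
  rw [Game.p_alt_alt, div_mul_cancel₀ β hα]

/-- the games `G(α + β)` and `(G(α))(β/(1 + nα))` are identical: every player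
gets the same payoff at every joint strategy. -/
theorem alt_alt_eq_alt_add {n : ℕ} (G : Game n) (α β : ℝ) (hα : 0 ≤ α) (hβ : 0 ≤ β) :
    ∀ (i : Fin n) (s : (j : Fin n) → G.S j),
      (G.alt (α + β)).p i s = ((G.alt α).alt (β / (1 + n * α))).p i s :=
  alt_alt_eq_alt_add_general G α β (by positivity)
end

section
/- Let G be a strategic game with n players. For α ∈ ℝ_{≥0}, G is α-selfish if and only if G is β-selfish in Model B with β = αn/(1 + αn) ∈ [0,1], where G is β-selfish in Model B means that some pure Nash equilibrium of the game with payoffs r_i^β(s) := (1 − β)·p_i(s) + (β/n)·SW(s) is a social optimum of G. -/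
open Finset
open scoped ENNReal

namespace Game

/-- The Model B (Chen–Kempe) altruistic version of `G` with parameter `β`:
payoffs `(1 - β)·pᵢ(s) + (β/n)·SW(s)`. -/
noncomputable def modelB {n : ℕ} (G : Game n) (β : ℝ) : Game n where
  S := G.S
  ne := G.ne
  p := fun i s => (1 - β) * G.p i s + (β / n) * G.SW s

/-- `G` is `β`-selfish in Model B if some pure Nash equilibrium of `modelB G β`
is a social optimum of `G`. -/
def SelfishB {n : ℕ} (G : Game n) (β : ℝ) : Prop :=
  ∃ s, (G.modelB β).NashEq s ∧ G.SocialOptimum s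

end Game

namespace Game

variable {n : ℕ}

theorem nashEq_iff_of_payoff_le_iff {S : Fin n → Type} {ne ne' : ∀ i, Nonempty (S i)}
    {p q : Fin n → ((j : Fin n) → S j) → ℝ}
    (h : ∀ i s t, p i s ≤ p i t ↔ q i s ≤ q i t) (s : (j : Fin n) → S j) :
    (Game.mk S ne p).NashEq s ↔ (Game.mk S ne' q).NashEq s :=
  forall₂_congr fun i s' => h i (Function.update s i s') s

theorem modelB_payoff_eq_alt_payoff_div (G : Game n) {α : ℝ} (hα : 1 + α * n ≠ 0)
    (i : Fin n) (s : (j : Fin n) → G.S j) :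
    (G.modelB (α * n / (1 + α * n))).p i s = (G.alt α).p i s / (1 + α * n) := by
  have hn : (n : ℝ) ≠ 0 := Nat.cast_ne_zero.mpr i.pos.ne'
  have one_sub_β : 1 - α * n / (1 + α * n) = 1 / (1 + α * n) := by
    rw [one_sub_div hα, add_sub_cancel_right]
  have β_div_n : α * n / (1 + α * n) / n = α / (1 + α * n) := by
    rw [div_right_comm, mul_div_cancel_right₀ α hn]
  calc (1 - α * n / (1 + α * n)) * G.p i s + (α * n / (1 + α * n) / n) * G.SW s
      = 1 / (1 + α * n) * G.p i s + α / (1 + α * n) * G.SW s := by rw [one_sub_β, β_div_n]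
    _ = (G.p i s + α * G.SW s) / (1 + α * n) := by ring

theorem nashEq_alt_iff_nashEq_modelB (G : Game n) {α : ℝ} (hα : 0 < 1 + α * n)
    (s : (j : Fin n) → G.S j) :
    (G.alt α).NashEq s ↔ (G.modelB (α * n / (1 + α * n))).NashEq s := by
  refine nashEq_iff_of_payoff_le_iff (fun i t u => ?_) s
  change (G.alt α).p i t ≤ (G.alt α).p i u ↔
    (G.modelB (α * n / (1 + α * n))).p i t ≤ (G.modelB (α * n / (1 + α * n))).p i u
  rw [G.modelB_payoff_eq_alt_payoff_div hα.ne', G.modelB_payoff_eq_alt_payoff_div hα.ne',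
    div_le_div_iff_of_pos_right hα]

theorem selfish_iff_selfishB (G : Game n) {α : ℝ} (hα : 0 < 1 + α * n) :
    G.Selfish α ↔ G.SelfishB (α * n / (1 + α * n)) :=
  exists_congr fun s => and_congr_left' (G.nashEq_alt_iff_nashEq_modelB hα s)

end Game

/-- for `α ≥ 0`, `G` is `α`-selfish iff `G` is `β`-selfish in Model B with
`β = αn/(1 + αn) ∈ [0,1]`. -/
theorem selfish_iff_modelB_selfish {n : ℕ} (hn : 1 < n) (G : Game n) (α : ℝ) (hα : 0 ≤ α) :
    α * n / (1 + α * n) ∈ Set.Icc (0 : ℝ) 1 ∧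
    (G.Selfish α ↔ G.SelfishB (α * n / (1 + α * n))) := by
  have hαn : 0 ≤ α * n := by positivity
  have hpos : 0 < 1 + α * n := by positivity
  exact ⟨unitInterval.div_mem hαn hpos.le (le_add_of_nonneg_left zero_le_one),
    G.selfish_iff_selfishB hpos⟩
end

section
/- Let G be a strategic game, α ≥ 0, and let s be a stable social optimum of G. Then s is a Nash equilibrium of G(α) if and only if for all players i ∈ N and all s'_i ∈ U_i(s), α ≥ AF_i(s'_i, s), where U_i(s) := {s'_i ∈ S_i : p_i(s'_i, s_{-i}) > p_i(s_i, s_{-i})} and AF_i(s'_i, s) := (p_i(s'_i, s_{-i}) − p_i(s_i, s_{-i})) / (SW(s_i, s_{-i}) − SW(s'_i, s_{-i})). -/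
open Finset
open scoped ENNReal

namespace Game

variable {n : ℕ} {G : Game n} {α : ℝ} {s t : (j : Fin n) → G.S j} {i : Fin n} {s' : G.S i}

theorem SocialOptimum.of_SW_eq (hs : G.SocialOptimum s) (h : G.SW t = G.SW s) :
    G.SocialOptimum t :=
  fun u => (hs u).trans_eq h.symm

theorem AF_le_iff (h : G.SW (Function.update s i s') < G.SW s) :
    G.AF s i s' ≤ α ↔
      (G.alt α).p i (Function.update s i s') ≤ (G.alt α).p i s := by
  change _ ↔ G.p i (Function.update s i s') + α * G.SW (Function.update s i s') ≤
    G.p i s + α * G.SW s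
  rw [AF, div_le_iff₀ (sub_pos.2 h)]
  constructor <;> intro <;> linarith

theorem alt_p_le_alt_p (hα : 0 ≤ α) (hp : G.p i t ≤ G.p i s) (hSW : G.SW t ≤ G.SW s) :
    (G.alt α).p i t ≤ (G.alt α).p i s :=
  add_le_add hp (mul_le_mul_of_nonneg_left hSW hα)

theorem alt_p_update_le_iff (hα : 0 ≤ α)
    (hSW : G.SW (Function.update s i s') ≤ G.SW s)
    (htie : G.SW (Function.update s i s') = G.SW s →
      G.p i (Function.update s i s') ≤ G.p i s) :
    (G.alt α).p i (Function.update s i s') ≤ (G.alt α).p i s ↔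
      (G.p i s < G.p i (Function.update s i s') → G.AF s i s' ≤ α) := by
  rcases le_or_gt (G.p i (Function.update s i s')) (G.p i s) with hp | hp
  · exact iff_of_true (alt_p_le_alt_p hα hp hSW) fun hp' => absurd hp' hp.not_gt
  · -- At equal welfares `AF` would be the junk value `x / 0 = 0`.
    have hSW_lt : G.SW (Function.update s i s') < G.SW s :=
      hSW.lt_of_ne fun h => (htie h).not_gt hp
    rw [← AF_le_iff hSW_lt, forall_prop_of_true hp]

end Game

theorem nashEq_alt_iff_appeal_factors_le_general {n : ℕ} (G : Game n) (α : ℝ) (hα : 0 ≤ α)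
    (s : (j : Fin n) → G.S j)
    (hSW : ∀ (i : Fin n) (s' : G.S i), G.SW (Function.update s i s') ≤ G.SW s)
    (htie : ∀ (i : Fin n) (s' : G.S i), G.SW (Function.update s i s') = G.SW s →
      G.p i (Function.update s i s') ≤ G.p i s) :
    (G.alt α).NashEq s ↔
      ∀ (i : Fin n) (s' : G.S i),
        G.p i s < G.p i (Function.update s i s') → G.AF s i s' ≤ α :=
  forall₂_congr fun i s' => Game.alt_p_update_le_iff hα (hSW i s') (htie i s')

/-- a stable social optimum `s` of `G` is a Nash equilibrium of `G(α)` iff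
`α` is at least the appeal factor of every profitable unilateral deviation from `s`. -/
theorem nashEq_alt_iff_appeal_factors_le {n : ℕ} (G : Game n) (α : ℝ) (hα : 0 ≤ α)
    (s : (j : Fin n) → G.S j) (hs : G.StableOptimum s) :
    (G.alt α).NashEq s ↔
      ∀ (i : Fin n) (s' : G.S i),
        G.p i s < G.p i (Function.update s i s') → G.AF s i s' ≤ α :=
  nashEq_alt_iff_appeal_factors_le_general G α hα s (fun _ _ => hs.1 _)
    fun i s' h => hs.2 i s' (hs.1.of_SW_eq h)
end

section
/- Let G be a strategic game and let 0 ≤ α < β be real numbers. If G is α-selfish, then G is β-selfish. -/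
open Finset
open scoped ENNReal

namespace Game

variable {n : ℕ} {G : Game n} {α β : ℝ} {s : (j : Fin n) → G.S j}

theorem nashEq_alt_iff_sub_le :
    (G.alt α).NashEq s ↔ ∀ (i : Fin n) (s' : G.S i),
      G.p i (Function.update s i s') - G.p i s ≤
        α * (G.SW s - G.SW (Function.update s i s')) := by
  refine forall₂_congr fun i s' => ?_
  change G.p i (Function.update s i s') + α * G.SW (Function.update s i s') ≤
    G.p i s + α * G.SW s ↔ _
  constructor <;> intro h <;> linarith

theorem SocialOptimum.nashEq_alt_mono (hopt : G.SocialOptimum s) (hαβ : α ≤ β)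
    (hs : (G.alt α).NashEq s) : (G.alt β).NashEq s := by
  rw [nashEq_alt_iff_sub_le] at hs ⊢
  exact fun i s' => (hs i s').trans <|
    mul_le_mul_of_nonneg_right hαβ <| sub_nonneg.2 <| hopt _

end Game

theorem selfish_mono_general {n : ℕ} (G : Game n) : Monotone G.Selfish :=
  fun _ _ hαβ ⟨s, hs, hopt⟩ => ⟨s, hopt.nashEq_alt_mono hαβ hs, hopt⟩

/-- if `0 ≤ α < β` and `G` is `α`-selfish, then `G` is `β`-selfish. -/
theorem selfish_mono {n : ℕ} (G : Game n) (α β : ℝ) (hα : 0 ≤ α) (hαβ : α < β)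
    (h : G.Selfish α) : G.Selfish β :=
  selfish_mono_general G hαβ.le h
end

section
/- The selfishness level of every fair cost sharing game with non-negative integer facility costs is at most max{0, (1/2)·L·c_max − 1}, where L := max_{i ∈ N, s_i ∈ S_i} |s_i| is the maximum number of facilities any player can choose and c_max is the maximum facility cost. -/
open Finset
open scoped ENNReal

/-- A fair cost sharing game: `n` players, a finite set `E` of facilities with
non-negative costs, and for each player a nonempty set of admissible facility subsets. -/
structure CostSharingGame (n : ℕ) (E : Type) [Fintype E] [DecidableEq E] where
  strategies : Fin n → Finset (Finset E)
  ne : ∀ i, (strategies i).Nonempty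
  cost : E → ℝ
  cost_nonneg : ∀ e, 0 ≤ cost e

namespace CostSharingGame

variable {n : ℕ} {E : Type} [Fintype E] [DecidableEq E]

/-- A joint strategy is valid if every player plays an admissible facility set. -/
def Valid (G : CostSharingGame n E) (s : Fin n → Finset E) : Prop :=
  ∀ i, s i ∈ G.strategies i

/-- The number of players using facility `e` under the joint strategy `s`. -/
def load (s : Fin n → Finset E) (e : E) : ℕ :=
  (Finset.univ.filter fun i => e ∈ s i).card

/-- The cost of player `i`: each used facility's cost is shared evenly among its users. -/
noncomputable def playerCost (G : CostSharingGame n E) (i : Fin n) (s : Fin n → Finset E) : ℝ :=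
  ∑ e ∈ s i, G.cost e / load s e

/-- The social cost of a joint strategy. -/
noncomputable def SC (G : CostSharingGame n E) (s : Fin n → Finset E) : ℝ :=
  ∑ i, G.playerCost i s

/-- A valid joint strategy minimizing the social cost. -/
def SocialOptimum (G : CostSharingGame n E) (s : Fin n → Finset E) : Prop :=
  G.Valid s ∧ ∀ t, G.Valid t → G.SC s ≤ G.SC t

/-- A Nash equilibrium of the altruistic version `G(α)`, whose cost functions are
`rᵢ(s) = cᵢ(s) + α·SC(s)`. -/
def NashEqAlt (G : CostSharingGame n E) (α : ℝ) (s : Fin n → Finset E) : Prop :=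
  G.Valid s ∧ ∀ i, ∀ t ∈ G.strategies i,
    G.playerCost i s + α * G.SC s ≤
      G.playerCost i (Function.update s i t) + α * G.SC (Function.update s i t)

/-- `G` is `α`-selfish if some pure Nash equilibrium of `G(α)` is a social optimum. -/
def Selfish (G : CostSharingGame n E) (α : ℝ) : Prop :=
  ∃ s, G.NashEqAlt α s ∧ G.SocialOptimum s

/-- The selfishness level of `G` (`⊤` if `G` is `α`-selfish for no `α ≥ 0`). -/
noncomputable def selfishnessLevel (G : CostSharingGame n E) : ℝ≥0∞ :=
  sInf {x : ℝ≥0∞ | ∃ α : ℝ, 0 ≤ α ∧ G.Selfish α ∧ x = ENNReal.ofReal α}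

end CostSharingGame

/-!
Among the social optima choose one, `s`, that minimizes Rosenthal's potential. A unilateral
deviation to another social optimum changes the deviator's cost by exactly the change of the
potential, so it does not pay. Otherwise the social cost rises by some `Δ ≥ δ`, where `δ` is a gap
above the optimum (`δ = 1` for integer costs). A player's cost exceeds his marginal contribution to
the social cost by at most half the cost of his facilities, since only facilities shared by at least
two players contribute to the excess. Hence the deviator saves at most `B / 2 - Δ`, where `B` bounds
the cost of a single strategy, and `α * Δ` outweighs this once `B / 2 ≤ (1 + α) * δ`.
-/

namespace CostSharingGame

/-! `Function.update s i ∅` encodes the withdrawal of player `i` from `s`; the empty set need not be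
one of his strategies. -/

lemma load_update {n : ℕ} {E : Type} [DecidableEq E] (s : Fin n → Finset E)
    (i : Fin n) (t : Finset E) (e : E) :
    load (Function.update s i t) e =
      load (Function.update s i ∅) e + if e ∈ t then 1 else 0 := by
  simp only [load, card_filter]
  rw [← add_sum_erase _ _ (mem_univ i), ← add_sum_erase _ _ (mem_univ i)]
  have others : ∀ j ∈ univ.erase i, (if e ∈ Function.update s i t j then 1 else 0) =
      if e ∈ Function.update s i ∅ j then 1 else 0 := fun j hj => by
    simp only [Function.update_of_ne (ne_of_mem_erase hj)]
  rw [sum_congr rfl others]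
  simp [add_comm]

variable {n : ℕ} {E : Type} [Fintype E] [DecidableEq E]

lemma playerCost_update (G : CostSharingGame n E) (s : Fin n → Finset E) (i : Fin n)
    (t : Finset E) :
    G.playerCost i (Function.update s i t) =
      ∑ e ∈ t, G.cost e * ((load (Function.update s i ∅) e + 1 : ℕ) : ℝ)⁻¹ := by
  rw [playerCost, Function.update_self]
  exact sum_congr rfl fun e he => by rw [load_update, if_pos he, div_eq_mul_inv]

/-- The sum of the facility costs, each weighted by a function `f` of the load. The social cost and
Rosenthal's potential are both of this form. -/
noncomputable def weightedCost (G : CostSharingGame n E) (f : ℕ → ℝ) (s : Fin n → Finset E) : ℝ :=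
  ∑ e, G.cost e * f (load s e)

lemma weightedCost_update (G : CostSharingGame n E) (f : ℕ → ℝ) (s : Fin n → Finset E)
    (i : Fin n) (t : Finset E) :
    G.weightedCost f (Function.update s i t) = G.weightedCost f (Function.update s i ∅) +
      ∑ e ∈ t, G.cost e *
        (f (load (Function.update s i ∅) e + 1) - f (load (Function.update s i ∅) e)) := by
  rw [weightedCost, weightedCost, ← sum_ite_mem_eq t, ← sum_add_distrib]
  refine sum_congr rfl fun e _ => ?_
  rw [load_update]
  split_ifs
  · ring
  · simp

/-- Rosenthal's potential `∑ₑ cₑ (1 + 1/2 + ⋯ + 1/xₑ)`. -/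
noncomputable def potential (G : CostSharingGame n E) : (Fin n → Finset E) → ℝ :=
  G.weightedCost fun k => harmonic k

lemma potential_update (G : CostSharingGame n E) (s : Fin n → Finset E) (i : Fin n)
    (t : Finset E) :
    G.potential (Function.update s i t) =
      G.potential (Function.update s i ∅) + G.playerCost i (Function.update s i t) := by
  rw [potential, weightedCost_update, playerCost_update]
  simp [harmonic_succ]

lemma potential_update_sub_potential (G : CostSharingGame n E) (s : Fin n → Finset E)
    (i : Fin n) (t : Finset E) :
    G.potential (Function.update s i t) - G.potential s =
      G.playerCost i (Function.update s i t) - G.playerCost i s := by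
  have before := G.potential_update s i (s i)
  rw [Function.update_eq_self] at before
  rw [before, G.potential_update s i t]
  ring

lemma SC_eq_weightedCost (G : CostSharingGame n E) (s : Fin n → Finset E) :
    G.SC s = G.weightedCost (fun k => if k = 0 then 0 else 1) s := by
  simp only [SC, playerCost, weightedCost]
  rw [sum_comm' (t' := univ) (s' := fun e => {i | e ∈ s i}) (by simp)]
  refine sum_congr rfl fun e _ => ?_
  rw [sum_const, nsmul_eq_mul, ← load]
  split_ifs with unused
  · simp [unused]
  · rw [mul_one, mul_div_cancel₀ _ (Nat.cast_ne_zero.mpr unused)]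

lemma SC_update (G : CostSharingGame n E) (s : Fin n → Finset E) (i : Fin n) (t : Finset E) :
    G.SC (Function.update s i t) = G.SC (Function.update s i ∅) +
      ∑ e ∈ t, G.cost e * if load (Function.update s i ∅) e = 0 then 1 else 0 := by
  rw [SC_eq_weightedCost, SC_eq_weightedCost, weightedCost_update]
  congr 1
  exact sum_congr rfl fun e _ => by split_ifs <;> simp_all

lemma SC_update_le_add_playerCost (G : CostSharingGame n E) (s : Fin n → Finset E) (i : Fin n)
    (t : Finset E) :
    G.SC (Function.update s i t) ≤
      G.SC (Function.update s i ∅) + G.playerCost i (Function.update s i t) := by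
  rw [SC_update, playerCost_update]
  gcongr with e
  · exact G.cost_nonneg e
  · split_ifs with unused
    · simp [unused]
    · positivity

lemma playerCost_update_le (G : CostSharingGame n E) (s : Fin n → Finset E) (i : Fin n)
    (t : Finset E) :
    G.playerCost i (Function.update s i t) ≤
      G.SC (Function.update s i t) - G.SC (Function.update s i ∅) + (∑ e ∈ t, G.cost e) / 2 := by
  rw [SC_update, add_sub_cancel_left, playerCost_update, sum_div, ← sum_add_distrib]
  refine sum_le_sum fun e _ => ?_
  rw [div_eq_mul_inv, ← mul_add]
  refine mul_le_mul_of_nonneg_left ?_ (G.cost_nonneg e)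
  split_ifs with unused
  · simp [unused]
  · rw [zero_add]
    gcongr
    exact_mod_cast Nat.succ_le_succ (Nat.one_le_iff_ne_zero.mpr unused)

lemma SC_update_sub_SC_le (G : CostSharingGame n E) (s : Fin n → Finset E) (i : Fin n)
    (t : Finset E) :
    G.SC (Function.update s i t) - G.SC s ≤
      G.playerCost i (Function.update s i t) - G.playerCost i s + (∑ e ∈ s i, G.cost e) / 2 := by
  have before := G.playerCost_update_le s i (s i)
  rw [Function.update_eq_self] at before
  linarith [G.SC_update_le_add_playerCost s i t]

lemma Valid.update {G : CostSharingGame n E} {s : Fin n → Finset E} (hs : G.Valid s)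
    {i : Fin n} {t : Finset E} (ht : t ∈ G.strategies i) : G.Valid (Function.update s i t) :=
  (Function.forall_update_iff s fun j r => r ∈ G.strategies j).mpr ⟨ht, fun j _ => hs j⟩

lemma exists_socialOptimum_forall_le {β : Type*} [LinearOrder β] (G : CostSharingGame n E)
    (φ : (Fin n → Finset E) → β) :
    ∃ s, G.SocialOptimum s ∧ ∀ t, G.Valid t → G.SC t = G.SC s → φ s ≤ φ t := by
  obtain ⟨s, hs, lex_min⟩ := exists_min_image (Fintype.piFinset G.strategies)
    (fun s => toLex (G.SC s, φ s)) (Fintype.piFinset_nonempty.mpr G.ne)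
  simp only [Fintype.mem_piFinset, Prod.Lex.toLex_le_toLex] at hs lex_min
  refine ⟨s, ⟨hs, fun t ht => ?_⟩, fun t ht hSC => ?_⟩
  · exact (lex_min t ht).elim le_of_lt fun h => h.1.le
  · exact (lex_min t ht).elim (fun h => absurd hSC h.ne') And.right

lemma selfish_of_SC_gap (G : CostSharingGame n E) {α δ B : ℝ} (hα : 0 ≤ 1 + α)
    (hB : ∀ i, ∀ t ∈ G.strategies i, ∑ e ∈ t, G.cost e ≤ B)
    (gap : ∀ s t, G.SocialOptimum s → G.Valid t → G.SC s < G.SC t → G.SC s + δ ≤ G.SC t)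
    (hαB : B / 2 ≤ (1 + α) * δ) : G.Selfish α := by
  obtain ⟨s, hs, potential_min⟩ := G.exists_socialOptimum_forall_le G.potential
  refine ⟨s, ⟨hs.1, fun i t ht => ?_⟩, hs⟩
  have hu : G.Valid (Function.update s i t) := hs.1.update ht
  rcases (hs.2 _ hu).eq_or_lt with same | worse
  · rw [← same]
    linarith [potential_min _ hu same.symm, G.potential_update_sub_potential s i t]
  · have half_le : B / 2 ≤ (1 + α) * (G.SC (Function.update s i t) - G.SC s) :=
      hαB.trans (mul_le_mul_of_nonneg_left (by linarith [gap s _ hs hu worse]) hα)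
    linarith [G.SC_update_sub_SC_le s i t, hB i (s i) (hs.1 i)]

lemma Selfish.selfishnessLevel_le {G : CostSharingGame n E} {α : ℝ} (h : G.Selfish α)
    (hα : 0 ≤ α) : G.selfishnessLevel ≤ ENNReal.ofReal α :=
  sInf_le ⟨α, hα, h, rfl⟩

lemma SC_mem (G : CostSharingGame n E) {M : AddSubmonoid ℝ} (hM : ∀ e, G.cost e ∈ M)
    (s : Fin n → Finset E) : G.SC s ∈ M := by
  simp only [SC_eq_weightedCost, weightedCost]
  refine sum_mem fun e _ => ?_
  split_ifs
  · simp
  · simpa using hM e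

lemma SC_add_one_le_of_lt (G : CostSharingGame n E) (hint : ∀ e, ∃ k : ℕ, G.cost e = k)
    {s t : Fin n → Finset E} (h : G.SC s < G.SC t) : G.SC s + 1 ≤ G.SC t := by
  have natural (r : Fin n → Finset E) : ∃ k : ℕ, (k : ℝ) = G.SC r :=
    G.SC_mem (M := AddMonoidHom.mrange (Nat.castAddMonoidHom ℝ))
      (fun e => (hint e).imp fun _ hk => hk.symm) r
  obtain ⟨a, ha⟩ := natural s
  obtain ⟨b, hb⟩ := natural t
  rw [← ha, ← hb] at h ⊢
  exact_mod_cast h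

lemma sum_cost_le_sup_card_mul_sup_cost [Nonempty E] (G : CostSharingGame n E) {i : Fin n}
    {t : Finset E} (ht : t ∈ G.strategies i) :
    ∑ e ∈ t, G.cost e ≤ ((univ.sup fun i => (G.strategies i).sup card : ℕ) : ℝ) *
      univ.sup' univ_nonempty G.cost := by
  have cost_le (e : E) : G.cost e ≤ univ.sup' univ_nonempty G.cost := le_sup' _ (mem_univ e)
  have card_le : #t ≤ univ.sup fun i => (G.strategies i).sup card :=
    (le_sup ht).trans (le_sup (f := fun i => (G.strategies i).sup card) (mem_univ i))
  have max_nonneg : 0 ≤ univ.sup' univ_nonempty G.cost :=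
    (G.cost_nonneg (Classical.arbitrary E)).trans (cost_le _)
  calc ∑ e ∈ t, G.cost e ≤ #t * univ.sup' univ_nonempty G.cost := by
        simpa using sum_le_card_nsmul t _ _ fun e _ => cost_le e
    _ ≤ _ := by gcongr

end CostSharingGame

theorem selfishnessLevel_integer_costSharing_le_general
    {n : ℕ} {E : Type} [Fintype E] [DecidableEq E] (G : CostSharingGame n E) {B δ : ℝ}
    (hB : ∀ i, ∀ t ∈ G.strategies i, ∑ e ∈ t, G.cost e ≤ B) (hδ : 0 < δ)
    (gap : ∀ s t, G.SocialOptimum s → G.Valid t → G.SC s < G.SC t → G.SC s + δ ≤ G.SC t) :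
    G.selfishnessLevel ≤ ENNReal.ofReal (max 0 (B / (2 * δ) - 1)) := by
  set α := max 0 (B / (2 * δ) - 1)
  have hα : 0 ≤ α := le_max_left _ _
  have ratio_le : B / (2 * δ) ≤ 1 + α := by linarith [le_max_right 0 (B / (2 * δ) - 1)]
  refine (G.selfish_of_SC_gap (by linarith) hB gap ?_).selfishnessLevel_le hα
  rwa [← div_le_iff₀ hδ, div_div]

/-- the selfishness level of every fair cost sharing game with non-negative
integer facility costs is at most `max {0, (1/2)·L·c_max - 1}`, where `L` is the maximum
number of facilities a player can choose. -/
theorem selfishnessLevel_integer_costSharing_le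
    {n : ℕ} {E : Type} [Fintype E] [DecidableEq E] [Nonempty E]
    (hn : 1 < n) (G : CostSharingGame n E)
    (hint : ∀ e, ∃ k : ℕ, G.cost e = k) :
    G.selfishnessLevel ≤ ENNReal.ofReal
      (max 0 ((1 / 2) * ((Finset.univ.sup fun i => (G.strategies i).sup Finset.card : ℕ) : ℝ) *
        Finset.univ.sup' Finset.univ_nonempty G.cost - 1)) := by
  simpa only [mul_one, one_mul, div_mul_eq_mul_div] using
    selfishnessLevel_integer_costSharing_le_general G
      (fun _ _ => G.sum_cost_le_sup_card_mul_sup_cost) one_pos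
      fun _ _ _ _ => G.SC_add_one_le_of_lt hint
end

section
/- The selfishness level of every linear congestion game with non-negative integer coefficients is at most max{0, (1/2)·(L·Δ_max − Δ_min − 1)}, where L := max_{i ∈ N, s_i ∈ S_i} |s_i|, Δ_max := max_{e∈E} (a_e + b_e) and Δ_min := min_{e∈E} (a_e + b_e). -/
open Finset
open scoped ENNReal

/-- A linear congestion game with non-negative integer coefficients: `n` players, a finite
set `E` of facilities with delay functions `d_e(x) = a_e·x + b_e` (`a_e, b_e ∈ ℕ`), and for
each player a nonempty set of admissible facility subsets. -/
structure LinearCongestionGame (n : ℕ) (E : Type) [Fintype E] [DecidableEq E] where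
  strategies : Fin n → Finset (Finset E)
  ne : ∀ i, (strategies i).Nonempty
  a : E → ℕ
  b : E → ℕ

namespace LinearCongestionGame

variable {n : ℕ} {E : Type} [Fintype E] [DecidableEq E]

/-- A joint strategy is valid if every player plays an admissible facility set. -/
def Valid (G : LinearCongestionGame n E) (s : Fin n → Finset E) : Prop :=
  ∀ i, s i ∈ G.strategies i

/-- The number of players using facility `e` under the joint strategy `s`. -/
def load (s : Fin n → Finset E) (e : E) : ℕ :=
  (Finset.univ.filter fun i => e ∈ s i).card

/-- The cost of player `i`: the sum of the delays `a_e·x_e(s) + b_e` of his facilities. -/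
def playerCost (G : LinearCongestionGame n E) (i : Fin n) (s : Fin n → Finset E) : ℝ :=
  ∑ e ∈ s i, ((G.a e : ℝ) * load s e + (G.b e : ℝ))

/-- The social cost of a joint strategy. -/
def SC (G : LinearCongestionGame n E) (s : Fin n → Finset E) : ℝ :=
  ∑ i, G.playerCost i s

/-- A valid joint strategy minimizing the social cost. -/
def SocialOptimum (G : LinearCongestionGame n E) (s : Fin n → Finset E) : Prop :=
  G.Valid s ∧ ∀ t, G.Valid t → G.SC s ≤ G.SC t

/-- A Nash equilibrium of the altruistic version `G(α)`, whose cost functions are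
`rᵢ(s) = cᵢ(s) + α·SC(s)`. -/
def NashEqAlt (G : LinearCongestionGame n E) (α : ℝ) (s : Fin n → Finset E) : Prop :=
  G.Valid s ∧ ∀ i, ∀ t ∈ G.strategies i,
    G.playerCost i s + α * G.SC s ≤
      G.playerCost i (Function.update s i t) + α * G.SC (Function.update s i t)

/-- `G` is `α`-selfish if some pure Nash equilibrium of `G(α)` is a social optimum. -/
def Selfish (G : LinearCongestionGame n E) (α : ℝ) : Prop :=
  ∃ s, G.NashEqAlt α s ∧ G.SocialOptimum s

/-- The selfishness level of `G` (`⊤` if `G` is `α`-selfish for no `α ≥ 0`). -/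
noncomputable def selfishnessLevel (G : LinearCongestionGame n E) : ℝ≥0∞ :=
  sInf {x : ℝ≥0∞ | ∃ α : ℝ, 0 ≤ α ∧ G.Selfish α ∧ x = ENNReal.ofReal α}

end LinearCongestionGame

/-! Let player `i` deviate from `s` to `t`, and let `w` be the cost of a strategy to a player who is
alone on all its facilities. For linear delays, a joining player raises the social cost by twice his
own cost minus `w` of his strategy, so the deviation changes the social cost by
`δSC = 2 δcᵢ - (w t - w (s i))`. Hence it is unprofitable in `G(α)` exactly when
`w (s i) - w t ≤ (1 + 2α) δSC`. At a social optimum `δSC` is a non-negative integer. If it is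
positive, then `w (s i) - w t ≤ L·Δ_max - Δ_min ≤ 1 + 2α` suffices. Ties `δSC = 0` are settled by
choosing, among all social optima, one with the least total `w`.
-/

namespace LinearCongestionGame

variable {n : ℕ} {E : Type} [DecidableEq E]

lemma load_update (s : Fin n → Finset E) (i : Fin n) (t : Finset E) (e : E) :
    load (Function.update s i t) e =
      load (Function.update s i ∅) e + if e ∈ t then 1 else 0 := by
  have load_eq (u : Finset E) : load (Function.update s i u) e =
      (∑ j ∈ univ.erase i, if e ∈ s j then 1 else 0) + if e ∈ u then 1 else 0 := by
    rw [load, card_filter, ← sum_erase_add _ _ (mem_univ i), Function.update_self]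
    congr 1
    refine sum_congr rfl fun j hj => ?_
    rw [Function.update_of_ne (ne_of_mem_erase hj)]
  simp only [load_eq, notMem_empty, if_false, add_zero]

lemma load_mono (e : E) : Monotone fun s : Fin n → Finset E => load s e :=
  fun _ _ hst => card_le_card <| monotone_filter_right _ fun i _ hi => hst i hi

variable [Fintype E]

lemma Valid.update {G : LinearCongestionGame n E} {s : Fin n → Finset E} (hs : G.Valid s)
    {i : Fin n} {t : Finset E} (ht : t ∈ G.strategies i) : G.Valid (Function.update s i t) := by
  intro j
  obtain rfl | hj := eq_or_ne j i
  · rwa [Function.update_self]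
  · rw [Function.update_of_ne hj]
    exact hs j

variable (G : LinearCongestionGame n E)

lemma SC_eq_sum_load_mul (s : Fin n → Finset E) :
    G.SC s = ∑ e, (load s e : ℝ) * (G.a e * load s e + G.b e) := by
  simp only [SC, playerCost, ← sum_ite_mem_eq (s _)]
  rw [sum_comm]
  refine sum_congr rfl fun e _ => ?_
  rw [← sum_filter, sum_const, nsmul_eq_mul, load]

lemma SC_mono : Monotone G.SC := by
  intro s t hst
  simp only [SC_eq_sum_load_mul]
  gcongr with e <;> exact load_mono e hst

lemma SC_add_one_le_of_lt {s t : Fin n → Finset E} (hst : G.SC s < G.SC t) :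
    G.SC s + 1 ≤ G.SC t := by
  have SC_eq_natCast (u : Fin n → Finset E) :
      G.SC u = (∑ e, load u e * (G.a e * load u e + G.b e) : ℕ) := by
    rw [SC_eq_sum_load_mul]
    push_cast
    rfl
  rw [SC_eq_natCast, SC_eq_natCast] at hst ⊢
  exact_mod_cast hst

/-- The cost `∑ e ∈ t, (a_e + b_e)` of the strategy `t` to a player who is alone on each of its
facilities. Together with the change in social cost, it decides whether a deviation pays off. It is
a natural number, unlike the real-valued `playerCost`. -/
def soloCost (t : Finset E) : ℕ :=
  ∑ e ∈ t, (G.a e + G.b e)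

lemma soloCost_le_mul {t : Finset E} {L D : ℕ} (hL : #t ≤ L) (hD : ∀ e, G.a e + G.b e ≤ D) :
    G.soloCost t ≤ L * D :=
  calc
    G.soloCost t ≤ #t * D := sum_le_card_nsmul _ _ _ fun e _ => hD e
    _ ≤ L * D := by gcongr

lemma le_soloCost {t : Finset E} (ht : t.Nonempty) {d : ℕ} (hd : ∀ e, d ≤ G.a e + G.b e) :
    d ≤ G.soloCost t := by
  obtain ⟨e, he⟩ := ht
  exact (hd e).trans <| single_le_sum (f := fun e => G.a e + G.b e) (fun _ _ => zero_le) he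

-- On a facility of `t` shared with `x` others: `(x+1)(a(x+1)+b) = x(ax+b) + 2(a(x+1)+b) - (a+b)`.
lemma SC_update (s : Fin n → Finset E) (i : Fin n) (t : Finset E) :
    G.SC (Function.update s i t) = G.SC (Function.update s i ∅) +
      2 * G.playerCost i (Function.update s i t) - G.soloCost t := by
  simp only [SC_eq_sum_load_mul, playerCost, soloCost, Function.update_self, Nat.cast_sum,
    ← sum_ite_mem_eq t, mul_sum, ← sum_add_distrib, ← sum_sub_distrib]
  refine sum_congr rfl fun e _ => ?_
  rw [load_update s i t]
  split_ifs <;> push_cast <;> ring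

lemma playerCost_add_mul_SC_le_update_iff (α : ℝ) (s : Fin n → Finset E) (i : Fin n)
    (t : Finset E) :
    G.playerCost i s + α * G.SC s ≤
        G.playerCost i (Function.update s i t) + α * G.SC (Function.update s i t) ↔
      (G.soloCost (s i) : ℝ) - G.soloCost t ≤
        (1 + 2 * α) * (G.SC (Function.update s i t) - G.SC s) := by
  have SC_self := G.SC_update s i (s i)
  rw [Function.update_eq_self] at SC_self
  have SC_deviation := G.SC_update s i t
  constructor <;> intro h <;> linarith

lemma exists_socialOptimum : ∃ s, G.SocialOptimum s :=
  Set.exists_min_image {s | G.Valid s} G.SC (Set.toFinite _)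
    ⟨fun i => (G.ne i).choose, fun i => (G.ne i).choose_spec⟩

-- Among social optima, the minimizer of the total solo cost also minimizes Rosenthal's potential,
-- which equals `(SC s + ∑ i, soloCost (s i)) / 2` for linear delays.
lemma exists_socialOptimum_forall_soloCost_le :
    ∃ s, G.SocialOptimum s ∧ ∀ i, ∀ t, G.SocialOptimum (Function.update s i t) →
      G.soloCost (s i) ≤ G.soloCost t := by
  obtain ⟨s, hs, hmin⟩ := Set.exists_min_image {s | G.SocialOptimum s}
    (fun s => ∑ i, G.soloCost (s i)) (Set.toFinite _) G.exists_socialOptimum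
  refine ⟨s, hs, fun i t ht => ?_⟩
  have total_le := hmin _ ht
  have others_eq : ∑ j ∈ univ.erase i, G.soloCost (Function.update s i t j) =
      ∑ j ∈ univ.erase i, G.soloCost (s j) :=
    sum_congr rfl fun j hj => by rw [Function.update_of_ne (ne_of_mem_erase hj)]
  rwa [← sum_erase_add _ _ (mem_univ i), ← sum_erase_add _ _ (mem_univ i), others_eq,
    Function.update_self, add_le_add_iff_left] at total_le

theorem selfish_of_forall_soloCost_sub_le {α : ℝ}
    (h : ∀ i, ∀ u ∈ G.strategies i, ∀ t ∈ G.strategies i, t.Nonempty →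
      (G.soloCost u : ℝ) - G.soloCost t ≤ 1 + 2 * α) :
    G.Selfish α := by
  obtain ⟨s, hs, soloCost_le⟩ := G.exists_socialOptimum_forall_soloCost_le
  refine ⟨s, ⟨hs.1, fun i t ht => (G.playerCost_add_mul_SC_le_update_iff α s i t).2 ?_⟩, hs⟩
  have update_valid := hs.1.update ht
  obtain SC_eq | SC_lt := (hs.2 _ update_valid).eq_or_lt
  · have update_optimal : G.SocialOptimum (Function.update s i t) :=
      ⟨update_valid, fun u hu => SC_eq ▸ hs.2 u hu⟩
    rw [SC_eq, sub_self, mul_zero, sub_nonpos]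
    exact_mod_cast soloCost_le i t update_optimal
  · have t_nonempty : t.Nonempty := by
      rw [nonempty_iff_ne_empty]
      rintro rfl
      exact SC_lt.not_ge <| G.SC_mono <| update_le_self_iff.2 <| empty_subset _
    have factor_nonneg : 0 ≤ 1 + 2 * α := by
      simpa only [sub_self] using h i t ht t ht t_nonempty
    calc
      (G.soloCost (s i) : ℝ) - G.soloCost t ≤ 1 + 2 * α := h i _ (hs.1 i) t ht t_nonempty
      _ ≤ (1 + 2 * α) * (G.SC (Function.update s i t) - G.SC s) :=
        le_mul_of_one_le_right factor_nonneg <| le_sub_iff_add_le'.2 <| G.SC_add_one_le_of_lt SC_lt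

end LinearCongestionGame

/-- the selfishness level of every linear congestion game with non-negative
integer coefficients is at most `max {0, (1/2)·(L·Δ_max - Δ_min - 1)}`, where `L` is the
maximum number of facilities a player can choose, `Δ_max = max_e (a_e + b_e)` and
`Δ_min = min_e (a_e + b_e)`. -/
theorem selfishnessLevel_linearCongestion_le
    {n : ℕ} {E : Type} [Fintype E] [DecidableEq E] [Nonempty E]
    (hn : 1 < n) (G : LinearCongestionGame n E) :
    G.selfishnessLevel ≤ ENNReal.ofReal
      (max 0 ((1 / 2) *
        (((Finset.univ.sup fun i => (G.strategies i).sup Finset.card : ℕ) : ℝ) *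
          ((Finset.univ.sup' Finset.univ_nonempty fun e => G.a e + G.b e : ℕ) : ℝ) -
          ((Finset.univ.inf' Finset.univ_nonempty fun e => G.a e + G.b e : ℕ) : ℝ) - 1))) := by
  refine sInf_le ⟨_, le_max_left _ _, ?_, rfl⟩
  refine G.selfish_of_forall_soloCost_sub_le fun i u hu t _ t_nonempty => ?_
  set L := univ.sup fun i => (G.strategies i).sup card
  set D := univ.sup' univ_nonempty fun e => G.a e + G.b e
  set d := univ.inf' univ_nonempty fun e => G.a e + G.b e
  have card_le : #u ≤ L := (le_sup (f := card) hu).trans <|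
    le_sup (f := fun i => (G.strategies i).sup card) (mem_univ i)
  have le_LD : (G.soloCost u : ℝ) ≤ L * D := by
    exact_mod_cast G.soloCost_le_mul card_le fun e =>
      le_sup' (fun e => G.a e + G.b e) (mem_univ e)
  have d_le : (d : ℝ) ≤ G.soloCost t := by
    exact_mod_cast G.le_soloCost t_nonempty fun e => inf'_le _ (mem_univ e)
  linarith [le_max_right 0 ((1 / 2) * ((L : ℝ) * D - d - 1))]
end

section
/- For every n ≥ 2, every budget b > 0 and every multiplier c > 1, the selfishness level of the n-players public goods game, in which each player i has strategy set [0, b] and payoff p_i(s) := b − s_i + (c/n)·Σ_{j∈N} s_j, equals max{0, (1 − c/n)/(c − 1)}. -/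
open Finset
open scoped ENNReal

/-- The `n`-players public goods game with budget `b > 0` and multiplier `c`: each player
contributes an amount in `[0, b]` and has payoff `pᵢ(s) = b - sᵢ + (c/n)·∑ⱼ sⱼ`. -/
noncomputable def publicGoods (n : ℕ) (b c : ℝ) (hb : 0 < b) : Game n where
  S := fun _ => Set.Icc (0 : ℝ) b
  ne := fun _ => ⟨⟨0, Set.mem_Icc.mpr ⟨le_refl 0, hb.le⟩⟩⟩
  p := fun i s => b - (s i : ℝ) + (c / n) * ∑ j, (s j : ℝ)

/-!
Social welfare is an increasing affine function of the total contribution, so full contribution is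
the only social optimum and `α`-selfishness just asks whether it is an equilibrium of the
`α`-altruistic game. There a player who contributes one unit more loses `1 - c / n` directly and
gains `α * (c - 1)` through the welfare term, so full contribution is an equilibrium iff
`1 - c / n ≤ α * (c - 1)`.
-/

theorem Game.selfishnessLevel_eq_ofReal_max {n : ℕ} {G : Game n} {a : ℝ}
    (selfish_iff : ∀ α, 0 ≤ α → (G.Selfish α ↔ a ≤ α)) :
    G.selfishnessLevel = ENNReal.ofReal (max 0 a) := by
  refine IsLeast.csInf_eq ⟨⟨max 0 a, le_max_left .., ?_, rfl⟩, ?_⟩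
  · exact (selfish_iff _ (le_max_left ..)).2 (le_max_right ..)
  · rintro _ ⟨α, hα, hselfish, rfl⟩
    exact ENNReal.ofReal_le_ofReal (max_le hα ((selfish_iff α hα).1 hselfish))

theorem sum_comp_update {ι α M : Type*} [Fintype ι] [DecidableEq ι] [AddCommGroup M]
    (f : α → M) (s : ι → α) (i : ι) (x : α) :
    ∑ j, f (Function.update s i x j) = ∑ j, f (s j) + (f x - f (s i)) := by
  have sum_sub : ∑ j, (f (Function.update s i x j) - f (s j)) = f x - f (s i) := by
    rw [Fintype.sum_eq_single i fun j hj => by rw [Function.update_of_ne hj, sub_self],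
      Function.update_self]
  rw [← sum_sub, sum_sub_distrib, add_sub_cancel]

namespace publicGoods

variable {n : ℕ} {b c : ℝ} (hb : 0 < b)

theorem SW_eq (s : Fin n → Set.Icc (0 : ℝ) b) :
    (publicGoods n b c hb).SW s = n * b + (c - 1) * ∑ j, (s j : ℝ) := by
  change ∑ i, (b - (s i : ℝ) + c / n * ∑ j, (s j : ℝ)) = _
  rcases eq_or_ne n 0 with rfl | hn
  · simp
  · simp only [sum_add_distrib, sum_sub_distrib, sum_const, card_univ, Fintype.card_fin,
      nsmul_eq_mul]
    field_simp
    ring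

theorem alt_p_eq (α : ℝ) (s : Fin n → Set.Icc (0 : ℝ) b) (i : Fin n) :
    ((publicGoods n b c hb).alt α).p i s =
      b - s i + c / n * ∑ j, (s j : ℝ) + α * (n * b + (c - 1) * ∑ j, (s j : ℝ)) := by
  rw [← SW_eq hb s]
  rfl

theorem alt_p_update (α : ℝ) (s : Fin n → Set.Icc (0 : ℝ) b) (i : Fin n)
    (x : Set.Icc (0 : ℝ) b) :
    ((publicGoods n b c hb).alt α).p i (Function.update s i x) =
      ((publicGoods n b c hb).alt α).p i s + (x - s i) * (α * (c - 1) - (1 - c / n)) := by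
  refine (alt_p_eq hb α (Function.update s i x) i).trans ?_
  rw [alt_p_eq, sum_comp_update Subtype.val, Function.update_self]
  ring

/-- The joint strategy in which every player contributes the whole budget: the unique social
optimum, hence the only strategy to test for `α`-selfishness. -/
def fullContribution (n : ℕ) {b : ℝ} (hb : 0 < b) : Fin n → Set.Icc (0 : ℝ) b :=
  fun _ => ⟨b, Set.right_mem_Icc.2 hb.le⟩

theorem socialOptimum_iff (hc : 1 < c) (s : Fin n → Set.Icc (0 : ℝ) b) :
    (publicGoods n b c hb).SocialOptimum s ↔ s = fullContribution n hb := by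
  have SW_le_iff (t u : Fin n → Set.Icc (0 : ℝ) b) :
      (publicGoods n b c hb).SW t ≤ (publicGoods n b c hb).SW u ↔
        ∑ j, (t j : ℝ) ≤ ∑ j, (u j : ℝ) := by
    rw [SW_eq, SW_eq, add_le_add_iff_left, mul_le_mul_iff_right₀ (sub_pos.2 hc)]
  have le_full (t : Fin n → Set.Icc (0 : ℝ) b) (j : Fin n) :
      (t j : ℝ) ≤ fullContribution n hb j := (t j).2.2
  constructor
  · intro hs
    have sum_eq : ∑ j, (s j : ℝ) = ∑ j, (fullContribution n hb j : ℝ) :=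
      (sum_le_sum fun j _ => le_full s j).antisymm ((SW_le_iff _ _).1 (hs _))
    funext j
    exact Subtype.ext ((sum_eq_sum_iff_of_le fun j _ => le_full s j).1 sum_eq j (mem_univ j))
  · rintro rfl t
    exact (SW_le_iff t _).2 (sum_le_sum fun j _ => le_full t j)

theorem nashEq_alt_fullContribution_iff [NeZero n] (α : ℝ) :
    ((publicGoods n b c hb).alt α).NashEq (fullContribution n hb) ↔
      1 - c / n ≤ α * (c - 1) := by
  have deviation_le_iff (i : Fin n) (x : Set.Icc (0 : ℝ) b) :
      ((publicGoods n b c hb).alt α).p i (Function.update (fullContribution n hb) i x) ≤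
          ((publicGoods n b c hb).alt α).p i (fullContribution n hb) ↔
        (x - b) * (α * (c - 1) - (1 - c / n)) ≤ 0 := by
    rw [alt_p_update, add_le_iff_nonpos_right, fullContribution]
  constructor
  · intro hnash
    have withdraw := (deviation_le_iff 0 ⟨0, Set.left_mem_Icc.2 hb.le⟩).1 (hnash 0 _)
    exact sub_nonneg.1 (nonneg_of_mul_nonpos_right withdraw (by linarith))
  · intro h i x
    exact (deviation_le_iff i x).2
      (mul_nonpos_of_nonpos_of_nonneg (sub_nonpos.2 x.2.2) (sub_nonneg.2 h))

theorem selfish_iff [NeZero n] (hc : 1 < c) (α : ℝ) :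
    (publicGoods n b c hb).Selfish α ↔ (1 - c / n) / (c - 1) ≤ α := by
  rw [div_le_iff₀ (sub_pos.2 hc), ← nashEq_alt_fullContribution_iff hb]
  constructor
  · rintro ⟨s, hnash, hopt⟩
    rwa [(socialOptimum_iff hb hc s).1 hopt] at hnash
  · exact fun hnash => ⟨_, hnash, (socialOptimum_iff hb hc _).2 rfl⟩

end publicGoods

/-- the selfishness level of the `n`-players public goods game with
budget `b > 0` and multiplier `c > 1` equals `max {0, (1 - c/n)/(c - 1)}`. -/
theorem selfishnessLevel_publicGoods (n : ℕ) (hn : 2 ≤ n) (b c : ℝ) (hb : 0 < b)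
    (hc : 1 < c) :
    (publicGoods n b c hb).selfishnessLevel
      = ENNReal.ofReal (max 0 ((1 - c / n) / (c - 1))) := by
  have : NeZero n := ⟨by omega⟩
  exact Game.selfishnessLevel_eq_ofReal_max fun α _ => publicGoods.selfish_iff hb hc α
end

section
/- For every n ≥ 2, the selfishness level of the n-players Tragedy of the Commons game, in which each player i has strategy set [0,1] and payoff p_i(s) := max(0, s_i·(1 − Σ_{j∈N} s_j)), is infinite; that is, for no α ≥ 0 is the game α-selfish. -/
/-!
At a social optimum the total consumption is `1/2`, so with at least two players some player `i`
consumes less than `1/2`. If that player consumes `e` more, the private gain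
`e * (1/2 - s i - e)` is of first order in `e`, while the loss of social welfare `e ^ 2` is of
second order. The appeal factor `(1/2 - s i) / e - 1` is therefore unbounded as `e → 0`, whereas
in an equilibrium of `G(α)` no welfare-decreasing deviation has appeal factor above `α`.
-/

open Finset
open scoped ENNReal

/-- The `n`-players Tragedy of the Commons game: each player chooses a fraction in `[0,1]`
and has payoff `pᵢ(s) = max (0, sᵢ·(1 - ∑ⱼ sⱼ))`. -/
def tragedyOfCommons (n : ℕ) : Game n where
  S := fun _ => Set.Icc (0 : ℝ) 1
  ne := fun _ => ⟨⟨0, Set.mem_Icc.mpr ⟨le_refl 0, zero_le_one⟩⟩⟩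
  p := fun i s => max 0 ((s i : ℝ) * (1 - ∑ j, (s j : ℝ)))

theorem exists_lt_sum_of_sum_pos {ι M : Type*} [Fintype ι] [Nontrivial ι] [AddCommMonoid M]
    [LinearOrder M] [IsOrderedCancelAddMonoid M] {f : ι → M} (hf : 0 < ∑ i, f i) :
    ∃ i, f i < ∑ j, f j := by
  have hsum : ∑ i, f i < ∑ _i : ι, ∑ j, f j := by
    rw [sum_const, card_univ]
    simpa only [one_nsmul] using nsmul_lt_nsmul_left hf (Fintype.one_lt_card (α := ι))
  obtain ⟨i, -, hi⟩ := exists_lt_of_sum_lt hsum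
  exact ⟨i, hi⟩

namespace Game

variable {n : ℕ} {G : Game n} {α : ℝ}

theorem selfishnessLevel_eq_top_iff :
    G.selfishnessLevel = ⊤ ↔ ∀ α : ℝ, 0 ≤ α → ¬ G.Selfish α := by
  rw [selfishnessLevel, sInf_eq_top]
  constructor
  · intro h α hα hG
    exact ENNReal.ofReal_ne_top (h _ ⟨α, hα, hG, rfl⟩)
  · rintro h _ ⟨α, hα, hG, -⟩
    exact absurd hG (h α hα)

theorem NashEq.AF_le {s : (j : Fin n) → G.S j} (hs : (G.alt α).NashEq s) {i : Fin n}
    {s' : G.S i} (hSW : G.SW (Function.update s i s') < G.SW s) : G.AF s i s' ≤ α := by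
  have hdev : G.p i (Function.update s i s') + α * G.SW (Function.update s i s') ≤
      G.p i s + α * G.SW s := hs i s'
  rw [AF, div_le_iff₀ (sub_pos.2 hSW)]
  linarith

theorem not_selfish_of_forall_exists_lt_AF
    (h : ∀ s, G.SocialOptimum s → ∃ (i : Fin n) (s' : G.S i),
      G.SW (Function.update s i s') < G.SW s ∧ α < G.AF s i s') : ¬ G.Selfish α := by
  rintro ⟨s, hNash, hOpt⟩
  obtain ⟨i, s', hSW, hAF⟩ := h s hOpt
  exact hAF.not_ge (hNash.AF_le hSW)

end Game

namespace tragedyOfCommons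

variable {n : ℕ} {s : (j : Fin n) → (tragedyOfCommons n).S j} {i : Fin n}
  {x : (tragedyOfCommons n).S i}

/-- The fraction of the common resource consumed under a strategy. It is the inclusion of `[0, 1]`
into `ℝ`, made a definition because the strategy sets of `tragedyOfCommons n` are not syntactically
subtypes of `ℝ`. -/
def share (x : (tragedyOfCommons n).S i) : ℝ := Subtype.val (p := (· ∈ Set.Icc (0 : ℝ) 1)) x

theorem share_nonneg (x : (tragedyOfCommons n).S i) : 0 ≤ share x :=
  Set.Icc.coe_nonneg (R := ℝ) x

theorem exists_share_eq (i : Fin n) {r : ℝ} (hr : r ∈ Set.Icc 0 1) :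
    ∃ x : (tragedyOfCommons n).S i, share x = r :=
  ⟨⟨r, hr⟩, rfl⟩

/-- The total consumption `∑ⱼ sⱼ` of the common resource under the joint strategy `s`. -/
def total (s : (j : Fin n) → (tragedyOfCommons n).S j) : ℝ := ∑ j, share (s j)

theorem total_update (s : (j : Fin n) → (tragedyOfCommons n).S j) (i : Fin n)
    (x : (tragedyOfCommons n).S i) :
    total (Function.update s i x) = total s + (share x - share (s i)) := by
  simp only [total, Function.apply_update (fun _ => share) s i x,
    sum_update_of_mem (mem_univ i), ← add_sum_erase univ (fun j => share (s j)) (mem_univ i),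
    sdiff_singleton_eq_erase]
  ring

theorem p_eq (s : (j : Fin n) → (tragedyOfCommons n).S j) (i : Fin n) :
    (tragedyOfCommons n).p i s = share (s i) * max 0 (1 - total s) := by
  rw [mul_max_of_nonneg _ _ (share_nonneg _), mul_zero]
  rfl

theorem SW_eq (s : (j : Fin n) → (tragedyOfCommons n).S j) :
    (tragedyOfCommons n).SW s = total s * max 0 (1 - total s) := by
  simp only [Game.SW, p_eq, ← sum_mul, total]

theorem exists_total_eq_half (hn : n ≠ 0) :
    ∃ s : (j : Fin n) → (tragedyOfCommons n).S j, total s = 1 / 2 := by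
  choose idle h_idle using fun j : Fin n => exists_share_eq j (r := 0) (by norm_num)
  obtain ⟨x, hx⟩ := exists_share_eq (⟨0, Nat.pos_of_ne_zero hn⟩ : Fin n) (r := 1 / 2) (by norm_num)
  refine ⟨Function.update idle _ x, ?_⟩
  rw [total_update, hx]
  simp only [total, h_idle, sum_const_zero, zero_add, sub_zero]

theorem SW_of_total_eq_half (hs : total s = 1 / 2) : (tragedyOfCommons n).SW s = 1 / 4 := by
  rw [SW_eq, hs]
  norm_num

theorem total_eq_half_of_socialOptimum (hn : n ≠ 0)
    (hs : (tragedyOfCommons n).SocialOptimum s) : total s = 1 / 2 := by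
  obtain ⟨t, ht⟩ := exists_total_eq_half hn
  have hSW : 1 / 4 ≤ total s * max 0 (1 - total s) := by
    rw [← SW_of_total_eq_half ht, ← SW_eq]
    exact hs t
  rcases max_choice 0 (1 - total s) with hmax | hmax <;> rw [hmax] at hSW
  · norm_num at hSW
  · have hsq : (total s - 1 / 2) ^ 2 ≤ 0 := by linarith
    exact sub_eq_zero.1 (sq_nonpos_iff _ |>.1 hsq)

theorem p_of_total_eq_half (hs : total s = 1 / 2) :
    (tragedyOfCommons n).p i s = share (s i) / 2 := by
  rw [p_eq, hs, max_eq_right (by norm_num)]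
  ring

theorem max_one_sub_total_update (hs : total s = 1 / 2)
    (hx : share x - share (s i) ≤ 1 / 2) :
    max 0 (1 - total (Function.update s i x)) = 1 / 2 - (share x - share (s i)) := by
  rw [total_update, hs, max_eq_right] <;> linarith

theorem SW_update_of_total_eq_half (hs : total s = 1 / 2)
    (hx : share x - share (s i) ≤ 1 / 2) :
    (tragedyOfCommons n).SW (Function.update s i x) = 1 / 4 - (share x - share (s i)) ^ 2 := by
  rw [SW_eq, max_one_sub_total_update hs hx, total_update, hs]
  ring

theorem p_update_of_total_eq_half (hs : total s = 1 / 2)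
    (hx : share x - share (s i) ≤ 1 / 2) :
    (tragedyOfCommons n).p i (Function.update s i x) =
      share x * (1 / 2 - (share x - share (s i))) := by
  rw [p_eq, max_one_sub_total_update hs hx, Function.update_self]

theorem AF_of_total_eq_half (hs : total s = 1 / 2)
    (hx : share x - share (s i) ≤ 1 / 2) (hne : share x ≠ share (s i)) :
    (tragedyOfCommons n).AF s i x = (1 / 2 - share (s i)) / (share x - share (s i)) - 1 := by
  have he : share x - share (s i) ≠ 0 := sub_ne_zero.2 hne
  rw [Game.AF, p_update_of_total_eq_half hs hx, p_of_total_eq_half hs, SW_of_total_eq_half hs,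
    SW_update_of_total_eq_half hs hx, sub_sub_cancel]
  field_simp
  ring

theorem exists_lt_AF (hs : total s = 1 / 2) (hi : share (s i) < 1 / 2) (α : ℝ) :
    ∃ x : (tragedyOfCommons n).S i,
      (tragedyOfCommons n).SW (Function.update s i x) < (tragedyOfCommons n).SW s ∧
        α < (tragedyOfCommons n).AF s i x := by
  have hi_nonneg : 0 ≤ share (s i) := share_nonneg _
  have hd : 0 < 1 / 2 - share (s i) := sub_pos.2 hi
  -- This choice makes the appeal factor equal to `|α| + 1`.
  set e : ℝ := (1 / 2 - share (s i)) / (|α| + 2) with he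
  have he_pos : 0 < e := by positivity
  have he_le : e ≤ 1 / 2 - share (s i) := div_le_self hd.le (by linarith [abs_nonneg α])
  obtain ⟨x, hx⟩ := exists_share_eq i (r := share (s i) + e) ⟨by linarith, by linarith⟩
  have hxe : share x - share (s i) = e := sub_eq_of_eq_add' hx
  have hx_le : share x - share (s i) ≤ 1 / 2 := by linarith
  refine ⟨x, ?_, ?_⟩
  · rw [SW_of_total_eq_half hs, SW_update_of_total_eq_half hs hx_le, hxe]
    exact sub_lt_self _ (pow_pos he_pos 2)
  · calc α < |α| + 1 := by linarith [le_abs_self α]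
      _ = (1 / 2 - share (s i)) / e - 1 := by rw [he, div_div_cancel₀ hd.ne']; ring
      _ = (tragedyOfCommons n).AF s i x := by
        rw [AF_of_total_eq_half hs hx_le (sub_ne_zero.1 (hxe ▸ he_pos.ne')), hxe]

end tragedyOfCommons

theorem selfishnessLevel_tragedyOfCommons_general {n : ℕ} (hn : 2 ≤ n) (α : ℝ) :
    ¬ (tragedyOfCommons n).Selfish α := by
  refine Game.not_selfish_of_forall_exists_lt_AF fun s hOpt => ?_
  have : Nontrivial (Fin n) := Fin.nontrivial_iff_two_le.2 hn
  have hs : tragedyOfCommons.total s = 1 / 2 :=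
    tragedyOfCommons.total_eq_half_of_socialOptimum (by lia) hOpt
  obtain ⟨i, hi⟩ : ∃ i, tragedyOfCommons.share (s i) < tragedyOfCommons.total s :=
    exists_lt_sum_of_sum_pos (one_half_pos.trans_eq hs.symm)
  exact ⟨i, tragedyOfCommons.exists_lt_AF hs (hi.trans_eq hs) α⟩

/-- the selfishness level of the `n`-players Tragedy of the Commons game is
infinite; that is, for no `α ≥ 0` is the game `α`-selfish. -/
theorem selfishnessLevel_tragedyOfCommons (n : ℕ) (hn : 2 ≤ n) :
    (tragedyOfCommons n).selfishnessLevel = ⊤ ∧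
    ∀ α : ℝ, 0 ≤ α → ¬ (tragedyOfCommons n).Selfish α := by
  have hns := selfishnessLevel_tragedyOfCommons_general hn
  exact ⟨Game.selfishnessLevel_eq_top_iff.2 fun α _ => hns α, fun α _ => hns α⟩
end
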